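/- arXiv:2202.08308 — 2 statements merged into one kernel-verified Lean document; each statement's English description precedes it below -/
import Mathlib

section
/- Let n be an arbitrary positive integer and λ an arbitrary infinite cardinal. Then every feebly compact shift-continuous T₁-topology τ on the semigroup 𝓘_λ^n is totally countably pracompact. -/
/-!
For each pair `p` the set `{x | p ∈ x.graph}` is clopen: with `ε`, `φ` the rank-one idempotents on
the two coordinates of `p`, the continuous map `x ↦ ε * x * φ` takes the value `{p}` when
`p ∈ x.graph` and the value `0` otherwise, and points are closed. Hence sending `x` to the indicator
function of its graph is a continuous injection of `𝓘_γ^n` into `2^(γ × γ)`, and its image is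
sequentially compact. The up-sets of `𝓘_γ^n` are open and ranks are bounded, so the maximal elements
of open sets form a dense set of isolated points.

A sequence of isolated points has a subsequence whose images in `2^(γ × γ)` converge to the image of
some `a`. By injectivity `a` is then the only possible cluster point of the subsequence. In a feebly
compact space infinitely many isolated points always cluster somewhere, so only finitely many terms
lie outside any given neighbourhood of `a`, which is to say that the subsequence converges to `a`.
-/

open Set Topology Filter

/-- The symmetric inverse semigroup `𝓘_γ^n` of partial bijections of the set `γ`
of rank `≤ n`, represented by their (finite) graphs. -/
structure SymInvSg (γ : Type*) (n : ℕ) where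
  graph : Set (γ × γ)
  inj' : ∀ ⦃x y x' y'⦄, (x, y) ∈ graph → (x', y') ∈ graph → (x = x' ↔ y = y')
  finite' : graph.Finite
  card_le' : graph.ncard ≤ n

namespace SymInvSg

variable {γ : Type*} {n : ℕ}

theorem ext' {a b : SymInvSg γ n} (h : a.graph = b.graph) : a = b := by
  cases a; cases b; simpa using h

/-- Composition of partial bijections (in the left-to-right convention of
transformation semigroups, the choice of convention being immaterial). -/
instance : Mul (SymInvSg γ n) where
  mul a b :=
    { graph := {p | ∃ y, (p.1, y) ∈ a.graph ∧ (y, p.2) ∈ b.graph}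
      inj' := by
        rintro x z x' z' ⟨y, hxy, hyz⟩ ⟨y', hxy', hyz'⟩
        constructor
        · rintro rfl
          have hy : y = y' := (a.inj' hxy hxy').mp rfl
          subst hy
          exact (b.inj' hyz hyz').mp rfl
        · rintro rfl
          have hy : y = y' := (b.inj' hyz hyz').mpr rfl
          subst hy
          exact (a.inj' hxy hxy').mpr rfl
      finite' := by
        have : {p : γ × γ | ∃ y, (p.1, y) ∈ a.graph ∧ (y, p.2) ∈ b.graph} ⊆
            (fun q : (γ × γ) × (γ × γ) => (q.1.1, q.2.2)) '' (a.graph ×ˢ b.graph) := by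
          rintro ⟨x, z⟩ ⟨y, hxy, hyz⟩
          exact ⟨((x, y), (y, z)), ⟨hxy, hyz⟩, rfl⟩
        exact Set.Finite.subset (Set.Finite.image _ (a.finite'.prod b.finite')) this
      card_le' := by
        have hinj : Set.InjOn Prod.fst
            {p : γ × γ | ∃ y, (p.1, y) ∈ a.graph ∧ (y, p.2) ∈ b.graph} := by
          rintro ⟨x, z⟩ ⟨y, hxy, hyz⟩ ⟨x', z'⟩ ⟨y', hxy', hyz'⟩ h
          simp only at h
          subst h
          have hy : y = y' := (a.inj' hxy hxy').mp rfl
          subst hy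
          have hz : z = z' := (b.inj' hyz hyz').mp rfl
          simp [hz]
        calc ({p : γ × γ | ∃ y, (p.1, y) ∈ a.graph ∧ (y, p.2) ∈ b.graph}).ncard
            ≤ (Prod.fst '' a.graph).ncard := by
              refine Set.ncard_le_ncard_of_injOn Prod.fst ?_ hinj (a.finite'.image _)
              rintro ⟨x, z⟩ hp
              exact ⟨(x, hp.choose), hp.choose_spec.1, rfl⟩
          _ ≤ a.graph.ncard := Set.ncard_image_le a.finite'
          _ ≤ n := a.card_le' }

theorem mul_graph (a b : SymInvSg γ n) :
    (a * b).graph = {p : γ × γ | ∃ y, (p.1, y) ∈ a.graph ∧ (y, p.2) ∈ b.graph} := rfl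

instance : Semigroup (SymInvSg γ n) where
  mul_assoc a b c := by
    refine ext' ?_
    simp only [mul_graph]
    ext ⟨x, w⟩
    constructor
    · rintro ⟨z, ⟨y, hxy, hyz⟩, hzw⟩
      exact ⟨y, hxy, z, hyz, hzw⟩
    · rintro ⟨y, hxy, z, hyz, hzw⟩
      exact ⟨z, ⟨y, hxy, hyz⟩, hzw⟩

/-- The zero of `𝓘_γ^n` is the empty partial map. -/
instance : Zero (SymInvSg γ n) :=
  ⟨{ graph := ∅
     inj' := by simp
     finite' := Set.finite_empty
     card_le' := by simp }⟩

/-- The natural partial order on the inverse semigroup `𝓘_γ^n`: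
`α ≼ β` iff the graph of `α` is contained in the graph of `β`. -/
instance : PartialOrder (SymInvSg γ n) where
  le a b := a.graph ⊆ b.graph
  le_refl a := subset_rfl
  le_trans a b c h₁ h₂ := Set.Subset.trans h₁ h₂
  le_antisymm a b h₁ h₂ := ext' (subset_antisymm h₁ h₂)

/-- The rank of a partial bijection: the cardinality of its domain
(equivalently, of its graph). -/
noncomputable def rank (a : SymInvSg γ n) : ℕ := a.graph.ncard

/-- `𝓘_A^n`: the subsemigroup of partial bijections with domain and range inside `A`. -/
def restrictedTo (A : Set γ) : Set (SymInvSg γ n) :=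
  {α | ∀ p ∈ α.graph, p.1 ∈ A ∧ p.2 ∈ A}

end SymInvSg

/-- A topology is shift-continuous when all left and right translations are continuous,
i.e. the space is a semitopological semigroup. -/
def ShiftContinuous (X : Type*) [TopologicalSpace X] [Mul X] : Prop :=
  ∀ a : X, Continuous (fun x => a * x) ∧ Continuous (fun x => x * a)

/-- A space is feebly compact if every locally finite family of nonempty open sets is finite. -/
def FeeblyCompact (X : Type*) [TopologicalSpace X] : Prop :=
  ∀ F : Set (Set X), (∀ U ∈ F, IsOpen U ∧ U.Nonempty) →
    LocallyFinite (fun U : F => (U : Set X)) → F.Finite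

/-- A space is sequentially pracompact if it has a dense subset `D` such that every
sequence in `D` has a convergent subsequence. -/
def SequentiallyPracompact (X : Type*) [TopologicalSpace X] : Prop :=
  ∃ D : Set X, Dense D ∧ ∀ u : ℕ → X, (∀ k, u k ∈ D) →
    ∃ (x : X) (φ : ℕ → ℕ), StrictMono φ ∧ Filter.Tendsto (u ∘ φ) Filter.atTop (nhds x)

/-- A space is totally countably pracompact if it has a dense subset `D` such that every
sequence in `D` has a subsequence whose closure is compact. -/
def TotallyCountablyPracompact (X : Type*) [TopologicalSpace X] : Prop :=
  ∃ D : Set X, Dense D ∧ ∀ u : ℕ → X, (∀ k, u k ∈ D) →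
    ∃ φ : ℕ → ℕ, StrictMono φ ∧ IsCompact (closure (Set.range (u ∘ φ)))

/-- A space is countably pracompact if it has a dense subset `A` such that every infinite
subset of `A` has an accumulation point in the space. -/
def CountablyPracompact (X : Type*) [TopologicalSpace X] : Prop :=
  ∃ A : Set X, Dense A ∧ ∀ B ⊆ A, B.Infinite → ∃ x : X, AccPt x (Filter.principal B)

/-- A space is ω-bounded-pracompact if it has a dense subset `D` such that every countable
subset of `D` has compact closure. -/
def OmegaBoundedPracompact (X : Type*) [TopologicalSpace X] : Prop :=
  ∃ D : Set X, Dense D ∧ ∀ C ⊆ D, C.Countable → IsCompact (closure C)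

/-- A space is feebly ω-bounded if for every sequence of nonempty open sets there is a
compact set meeting all of them. -/
def FeeblyOmegaBounded (X : Type*) [TopologicalSpace X] : Prop :=
  ∀ U : ℕ → Set X, (∀ k, IsOpen (U k) ∧ (U k).Nonempty) →
    ∃ K : Set X, IsCompact K ∧ ∀ k, (K ∩ U k).Nonempty

section FeeblyCompact

variable {X : Type*} [TopologicalSpace X]

theorem FeeblyCompact.finite_of_locallyFinite (hX : FeeblyCompact X) {ι : Type*} {U : ι → Set X}
    (hU : LocallyFinite U) (hopen : ∀ i, IsOpen (U i)) (hne : ∀ i, (U i).Nonempty) : Finite ι := by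
  have hrange : (range U).Finite :=
    hX (range U) (forall_mem_range.2 fun i => ⟨hopen i, hne i⟩) hU.on_range
  refine Set.finite_univ_iff.1 (Set.Finite.of_finite_fibers U (by rwa [image_univ]) ?_)
  rintro _ ⟨i, -, rfl⟩
  obtain ⟨x, hx⟩ := hne i
  refine (hU.point_finite x).subset fun j hj => ?_
  exact (show U j = U i from hj.2).symm.subset hx

theorem FeeblyCompact.exists_mapClusterPt_cofinite (hX : FeeblyCompact X) {ι : Type*} [Infinite ι]
    {v : ι → X} (hv : ∀ i, IsOpen {v i}) : ∃ x, MapClusterPt x cofinite v := by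
  by_contra! hno
  refine not_finite_iff_infinite.2 ‹Infinite ι›
    (hX.finite_of_locallyFinite (fun x => ?_) hv fun i => singleton_nonempty (v i))
  obtain ⟨V, hV, hfin⟩ : ∃ V ∈ 𝓝 x, ¬∃ᶠ i in cofinite, v i ∈ V := by
    simpa only [mapClusterPt_iff_frequently, not_forall, exists_prop] using hno x
  refine ⟨V, hV, ?_⟩
  simpa only [singleton_inter_nonempty, frequently_cofinite_iff_infinite, not_infinite] using hfin

theorem FeeblyCompact.tendsto_cofinite_of_unique_mapClusterPt (hX : FeeblyCompact X) {ι : Type*}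
    {v : ι → X} (hv : ∀ i, IsOpen {v i}) {a : X} (ha : ∀ x, MapClusterPt x cofinite v → x = a) :
    Tendsto v cofinite (𝓝 a) := by
  intro V hV
  by_contra hinf
  have : Infinite {i // v i ∉ V} := Set.infinite_coe_iff.2 hinf
  let w : {i // v i ∉ V} → X := fun i => v i
  obtain ⟨x, hx⟩ := hX.exists_mapClusterPt_cofinite (v := w) fun i => hv i
  obtain rfl : x = a := ha x (hx.of_comp Subtype.val_injective.tendsto_cofinite)
  obtain ⟨i, hi⟩ := (mapClusterPt_iff_frequently.1 hx V hV).exists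
  exact i.2 hi

theorem FeeblyCompact.sequentiallyPracompact {Y : Type*} [TopologicalSpace Y] [T2Space Y]
    (hX : FeeblyCompact X) (hdense : Dense {x : X | IsOpen {x}}) {f : X → Y} (hf : Continuous f)
    (hinj : Function.Injective f) (hrange : IsSeqCompact (range f)) : SequentiallyPracompact X := by
  refine ⟨_, hdense, fun u hu => ?_⟩
  obtain ⟨_, ⟨a, rfl⟩, φ, hφ, hlim⟩ := hrange fun k => mem_range_self (u k)
  refine ⟨a, φ, hφ, ?_⟩
  rw [← Nat.cofinite_eq_atTop] at hlim ⊢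
  refine hX.tendsto_cofinite_of_unique_mapClusterPt (fun k => hu (φ k)) fun x hx => hinj ?_
  have hfx : MapClusterPt (f x) cofinite (f ∘ u ∘ φ) := hx.continuousAt_comp hf.continuousAt
  exact eq_of_nhds_neBot (hfx.clusterPt.mono hlim)

end FeeblyCompact

theorem SequentiallyPracompact.totallyCountablyPracompact {X : Type*} [TopologicalSpace X]
    [T2Space X] (hX : SequentiallyPracompact X) : TotallyCountablyPracompact X := by
  obtain ⟨D, hD, hsub⟩ := hX
  refine ⟨D, hD, fun u hu => ?_⟩
  obtain ⟨x, φ, hφ, hlim⟩ := hsub u hu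
  exact ⟨φ, hφ, hlim.isCompact_insert_range.closure_of_subset (subset_insert _ _)⟩

theorem dense_isOpen_singleton_of_isOpen_Ici {X : Type*} [TopologicalSpace X] [PartialOrder X]
    [WellFoundedGT X] (hIci : ∀ a : X, IsOpen (Ici a)) : Dense {a : X | IsOpen {a}} := by
  refine dense_iff_inter_open.2 fun U hU hne => ?_
  obtain ⟨a, haU, hmax⟩ := wellFounded_gt.has_min U hne
  have hinter : U ∩ Ici a = {a} := by
    refine Subset.antisymm (fun x ⟨hxU, hax⟩ => ?_) (singleton_subset_iff.2 ⟨haU, le_rfl⟩)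
    exact (eq_of_le_of_not_lt hax (hmax x hxU)).symm
  have hopen : IsOpen {a} := hinter ▸ hU.inter (hIci a)
  exact ⟨a, haU, hopen⟩

theorem tendsto_boolIndicator_iff_forall_eventually {α ι : Type*} {l : Filter ι} {F : ι → Set α}
    {s : Set α} :
    Tendsto (fun i => (F i).boolIndicator) l (𝓝 s.boolIndicator) ↔
      ∀ p, ∀ᶠ i in l, (p ∈ F i ↔ p ∈ s) := by
  simp only [tendsto_pi_nhds, nhds_discrete, tendsto_pure, mem_iff_boolIndicator,
    ← Bool.eq_iff_iff]

theorem exists_subseq_tendsto_boolIndicator {α : Type*} {F : ℕ → Set α}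
    (hF : ∀ k, (F k).Countable) :
    ∃ (s : Set α) (φ : ℕ → ℕ), StrictMono φ ∧
      Tendsto (fun k => (F (φ k)).boolIndicator) atTop (𝓝 s.boolIndicator) := by
  -- `2^C` is sequentially compact for the countable set `C` of points that occur
  let C : Set α := ⋃ k, F k
  have : Countable C := (countable_iUnion hF).to_subtype
  obtain ⟨g, φ, hφ, hlim⟩ :=
    SeqCompactSpace.tendsto_subseq fun k (c : C) => (F k).boolIndicator c
  refine ⟨{p | ∃ hp : p ∈ C, g ⟨p, hp⟩ = true}, φ, hφ,
    tendsto_boolIndicator_iff_forall_eventually.2 fun p => ?_⟩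
  by_cases hp : p ∈ C
  · have hev : ∀ᶠ k in atTop, (F (φ k)).boolIndicator p = g ⟨p, hp⟩ := by
      have hlim_p := tendsto_pi_nhds.1 hlim ⟨p, hp⟩
      rwa [nhds_discrete, tendsto_pure] at hlim_p
    filter_upwards [hev] with k hk
    rw [mem_iff_boolIndicator, hk]
    exact ⟨fun h => ⟨hp, h⟩, fun ⟨_, h⟩ => h⟩
  · exact Eventually.of_forall fun k =>
      iff_of_false (fun h => hp (mem_iUnion_of_mem _ h)) fun ⟨h, _⟩ => hp h

namespace SymInvSg

variable {γ : Type*} {n : ℕ}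

theorem graph_injective : Function.Injective (graph : SymInvSg γ n → Set (γ × γ)) :=
  fun _ _ => ext'

theorem rank_strictMono : StrictMono (rank : SymInvSg γ n → ℕ) := fun _ b hab =>
  ncard_lt_ncard ⟨hab.le, fun hba => hab.not_ge hba⟩ b.finite'

instance : WellFoundedGT (SymInvSg γ n) :=
  StrictMono.wellFoundedGT (f := fun a : SymInvSg γ n => (⟨a.rank, a.card_le'⟩ : Iic n))
    fun _ _ hab => rank_strictMono hab

theorem exists_graph_eq_of_forall_finite_subset {s : Set (γ × γ)}
    (hs : ∀ t ⊆ s, t.Finite → ∃ x : SymInvSg γ n, t ⊆ x.graph) :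
    ∃ x : SymInvSg γ n, x.graph = s := by
  have hcard : s.encard ≤ n := by
    by_contra! hlt
    obtain ⟨t, hts, ht⟩ := exists_subset_encard_eq (Order.add_one_le_of_lt hlt)
    obtain ⟨x, hx⟩ := hs t hts (finite_of_encard_eq_coe (k := n + 1) (mod_cast ht))
    have hxn : x.graph.encard ≤ n := encard_le_coe_iff_finite_ncard_le.2 ⟨x.finite', x.card_le'⟩
    have hle : ((n + 1 : ℕ) : ℕ∞) ≤ n := by
      exact_mod_cast ht ▸ (encard_le_encard hx).trans hxn
    exact absurd (Nat.cast_le.1 hle) n.not_succ_le_self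
  obtain ⟨hfin, hncard⟩ := encard_le_coe_iff_finite_ncard_le.1 hcard
  refine ⟨⟨s, fun a b a' b' h h' => ?_, hfin, hncard⟩, rfl⟩
  obtain ⟨x, hx⟩ := hs {(a, b), (a', b')} (pair_subset h h') (toFinite _)
  exact x.inj' (hx (mem_insert _ _)) (hx (mem_insert_of_mem _ rfl))

/-- The indicator function of the graph, a point of the Cantor cube `2^(γ × γ)`; it is valued in
`Bool` so that the cube carries the product of discrete topologies. -/
noncomputable def graphIndicator (x : SymInvSg γ n) : γ × γ → Bool :=
  x.graph.boolIndicator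

theorem graphIndicator_injective :
    Function.Injective (graphIndicator : SymInvSg γ n → γ × γ → Bool) := fun x y hxy =>
  graph_injective <| by
    rw [← preimage_boolIndicator_true x.graph, ← preimage_boolIndicator_true y.graph]
    exact congrArg (· ⁻¹' {true}) hxy

theorem isSeqCompact_range_graphIndicator :
    IsSeqCompact (range (graphIndicator : SymInvSg γ n → γ × γ → Bool)) := by
  intro v hv
  choose u hu using hv
  obtain rfl : (fun k => (u k).graphIndicator) = v := funext hu
  obtain ⟨s, φ, hφ, hlim⟩ :=
    exists_subseq_tendsto_boolIndicator fun k => (u k).finite'.countable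
  obtain ⟨x, rfl⟩ : ∃ x : SymInvSg γ n, x.graph = s := by
    refine exists_graph_eq_of_forall_finite_subset fun t hts ht => ?_
    have hev : ∀ᶠ k in atTop, ∀ p ∈ t, p ∈ (u (φ k)).graph :=
      (eventually_all_finite ht).2 fun p hp =>
        (tendsto_boolIndicator_iff_forall_eventually.1 hlim p).mono fun _ hk => hk.2 (hts hp)
    obtain ⟨k, hk⟩ := hev.exists
    exact ⟨u (φ k), hk⟩
  exact ⟨x.graphIndicator, mem_range_self x, φ, hφ, hlim⟩

/-- The rank-one partial bijection `a ↦ b`, the matrix unit `e_{ab}` of the semigroup. The bound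
`0 < n` makes room for it in `𝓘_γ^n`. -/
def single (hn : 0 < n) (a b : γ) : SymInvSg γ n where
  graph := {(a, b)}
  inj' := by
    rintro x y x' y' ⟨⟩ ⟨⟩
    exact iff_of_true rfl rfl
  finite' := finite_singleton _
  card_le' := (ncard_singleton _).trans_le hn

theorem graph_single (hn : 0 < n) (a b : γ) : (single hn a b).graph = {(a, b)} := rfl

theorem graph_zero : (0 : SymInvSg γ n).graph = ∅ := rfl

theorem graph_single_mul_mul_single (hn : 0 < n) (a b : γ) (x : SymInvSg γ n) :
    (single hn a a * x * single hn b b).graph = {(a, b)} ∩ x.graph := by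
  ext ⟨c, d⟩
  simp only [mul_graph, graph_single, mem_ofPred_eq, mem_inter_iff, mem_singleton_iff,
    Prod.mk.injEq]
  constructor
  · rintro ⟨_, ⟨_, ⟨rfl, rfl⟩, h⟩, rfl, rfl⟩
    exact ⟨⟨rfl, rfl⟩, h⟩
  · rintro ⟨⟨rfl, rfl⟩, h⟩
    exact ⟨d, ⟨c, ⟨rfl, rfl⟩, h⟩, rfl, rfl⟩

theorem single_mul_mul_single_eq_single_iff (hn : 0 < n) {a b : γ} {x : SymInvSg γ n} :
    single hn a a * x * single hn b b = single hn a b ↔ (a, b) ∈ x.graph := by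
  rw [← graph_injective.eq_iff, graph_single_mul_mul_single, graph_single, inter_eq_left,
    singleton_subset_iff]

theorem single_mul_mul_single_eq_zero_iff (hn : 0 < n) {a b : γ} {x : SymInvSg γ n} :
    single hn a a * x * single hn b b = 0 ↔ (a, b) ∉ x.graph := by
  rw [← graph_injective.eq_iff, graph_single_mul_mul_single, graph_zero,
    singleton_inter_eq_empty]

section Topology

variable [TopologicalSpace (SymInvSg γ n)] [T1Space (SymInvSg γ n)]

theorem isClopen_setOf_mem_graph (hn : 0 < n) (hsc : ShiftContinuous (SymInvSg γ n))
    (p : γ × γ) : IsClopen {x : SymInvSg γ n | p ∈ x.graph} := by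
  obtain ⟨a, b⟩ := p
  have hcont : Continuous fun x : SymInvSg γ n => single hn a a * x * single hn b b :=
    (hsc (single hn b b)).2.comp (hsc (single hn a a)).1
  constructor
  · simpa only [preimage, mem_singleton_iff, single_mul_mul_single_eq_single_iff] using
      (isClosed_singleton (x := single hn a b)).preimage hcont
  · simpa only [preimage, mem_compl_iff, mem_singleton_iff, single_mul_mul_single_eq_zero_iff,
      not_not] using (isOpen_compl_singleton (x := (0 : SymInvSg γ n))).preimage hcont

theorem continuous_graphIndicator (hn : 0 < n) (hsc : ShiftContinuous (SymInvSg γ n)) :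
    Continuous (graphIndicator : SymInvSg γ n → γ × γ → Bool) :=
  continuous_pi fun p =>
    (continuous_boolIndicator_iff_isClopen _).2 (isClopen_setOf_mem_graph hn hsc p)

theorem isOpen_Ici (hn : 0 < n) (hsc : ShiftContinuous (SymInvSg γ n)) (a : SymInvSg γ n) :
    IsOpen (Ici a) := by
  have hIci : Ici a = ⋂ p ∈ a.graph, {x : SymInvSg γ n | p ∈ x.graph} := by
    ext x
    simp only [mem_iInter]
    rfl
  rw [hIci]
  exact a.finite'.isOpen_biInter fun p _ => (isClopen_setOf_mem_graph hn hsc p).isOpen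

end Topology

end SymInvSg

/-- Every feebly compact shift-continuous `T₁`-topology on `𝓘_λ^n`
(`n` a positive integer, `λ` an infinite cardinal) is totally countably pracompact. -/
theorem totallyCountablyPracompact_of_feeblyCompact {γ : Type*} [Infinite γ] {n : ℕ}
    (hn : 0 < n)
    [TopologicalSpace (SymInvSg γ n)] [T1Space (SymInvSg γ n)]
    (hsc : ShiftContinuous (SymInvSg γ n))
    (hfc : FeeblyCompact (SymInvSg γ n)) :
    TotallyCountablyPracompact (SymInvSg γ n) := by
  have hcont := SymInvSg.continuous_graphIndicator hn hsc
  have hinj := SymInvSg.graphIndicator_injective (γ := γ) (n := n)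
  have : T2Space (SymInvSg γ n) := .of_injective_continuous hinj hcont
  have hdense := dense_isOpen_singleton_of_isOpen_Ici (SymInvSg.isOpen_Ici hn hsc)
  have hseq : SequentiallyPracompact (SymInvSg γ n) :=
    hfc.sequentiallyPracompact hdense hcont hinj SymInvSg.isSeqCompact_range_graphIndicator
  exact hseq.totallyCountablyPracompact
end

section
/- Let {𝓘_{λ_i}^{n_i} : i ∈ J} be a family of semigroups, where each λ_i is an infinite cardinal and each n_i is a positive integer, and suppose each 𝓘_{λ_i}^{n_i} carries a feebly compact shift-continuous T₁-topology (so it is a feebly compact T₁-semitopological semigroup). Let X = ∏_{i∈J} 𝓘_{λ_i}^{n_i} be the Tychonoff product. Then for every idempotent p of the semigroup X, the Σ-product Σ(p, X) = {x ∈ X : |{i ∈ J : x(i) ≠ p(i)}| ≤ ω}, with the subspace topology, is feebly compact. -/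
/-!
Write `S = 𝓘_γ^n`. Since `a ≤ b` iff `a⁻¹ b a⁻¹ = a⁻¹`, and the continuous map `b ↦ a⁻¹ b a⁻¹` has
finite range, every up-set `Ici a` is clopen because `S` is `T₁`; in particular, maximal elements
are isolated.

If infinitely many maximal elements have pairwise infimum `b`, they converge to `b`: every other
point `c` has a neighbourhood (`Ici c`, or the complement of `Ici b`) containing at most one of
them, so by feeble compactness no neighbourhood of `b` misses infinitely many. For infinite `γ` this
has two consequences. Extending a given `b` by identities of fresh points yields such a family, so
maximal elements are dense. And every ultrafilter of maximal elements converges to the partial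
bijection whose graph consists of the pairs lying in almost all graphs.

Given a sequence of nonempty open sets in the `Σ`-product, each contains every point agreeing on a
finite set of coordinates with some point all of whose coordinates are maximal. So the sets contain
points that differ from `p` only on one countable set of coordinates and converge coordinatewise
along a free ultrafilter; the sequence is not locally finite at the limit.
-/

open Set Topology Filter

namespace FeeblyCompact

variable {X ι : Type*} [TopologicalSpace X]

theorem of_forall_nat_not_locallyFinite
    (h : ∀ U : ℕ → Set X, (∀ k, IsOpen (U k) ∧ (U k).Nonempty) → ¬LocallyFinite U) :
    FeeblyCompact X := by
  intro F hF hlf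
  by_contra hinf
  let U : ℕ ↪ F := Set.Infinite.natEmbedding F hinf
  exact h (fun k => U k) (fun k => hF _ (U k).2) (hlf.comp_injective U.injective)

theorem finite_of_locallyFinite_s6 (hX : FeeblyCompact X) {U : ι → Set X}
    (hU : ∀ i, IsOpen (U i) ∧ (U i).Nonempty) (hlf : LocallyFinite U) : Finite ι := by
  have hrange : (range U).Finite := hX _ (forall_mem_range.2 hU) hlf.on_range
  refine Set.finite_univ_iff.1 (Set.Finite.of_finite_fibers U (by rwa [image_univ]) ?_)
  rintro _ ⟨i, -, rfl⟩
  obtain ⟨x, hx⟩ := (hU i).2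
  exact (hlf.point_finite x).subset fun j hj => hj.2.superset hx

variable [PartialOrder X]

theorem tendsto_cofinite_of_pairwise_isGLB (hX : FeeblyCompact X)
    (hIci : ∀ a : X, IsClopen (Ici a)) {f : ι → X} {b : X} (hmax : ∀ i, IsMax (f i))
    (hglb : Pairwise fun i j => IsGLB {f i, f j} b) : Tendsto f cofinite (𝓝 b) := by
  refine tendsto_nhds.2 fun W hW hbW => mem_cofinite.2 ?_
  rcases subsingleton_or_nontrivial ι with _ | _
  · exact Set.toFinite _
  have hle (i : ι) : b ≤ f i := by
    obtain ⟨j, hj⟩ := exists_ne i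
    exact (hglb hj).1 (by simp)
  refine hX.finite_of_locallyFinite_s6 (U := fun i : ↥(f ⁻¹' W)ᶜ => {f i})
    (fun i => ⟨(hmax i).Ici_eq ▸ (hIci (f i)).isOpen, singleton_nonempty _⟩) fun c => ?_
  simp only [singleton_inter_nonempty]
  by_cases hbc : b ≤ c
  · rcases hbc.eq_or_lt with rfl | hlt
    · exact ⟨W, hW.mem_nhds hbW, Set.finite_empty.subset fun i hi => i.2 hi⟩
    · refine ⟨Ici c, (hIci c).isOpen.mem_nhds self_mem_Ici, Set.Subsingleton.finite ?_⟩
      intro i hi j hj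
      by_contra hij
      have hcb : c ≤ b := (hglb (Subtype.coe_injective.ne hij)).2 (by
        rintro _ (rfl | rfl)
        exacts [hi, hj])
      exact hlt.not_ge hcb
  · exact ⟨(Ici b)ᶜ, (hIci b).compl.isOpen.mem_nhds hbc,
      Set.finite_empty.subset fun i hi => hi (hle i)⟩

theorem mem_closure_of_forall_finset_exists_isGLB (hX : FeeblyCompact X)
    (hIci : ∀ a : X, IsClopen (Ici a)) {s : Set X} {b : X} (hmax : ∀ a ∈ s, IsMax a)
    (h : ∀ t : Finset X, (∀ x ∈ t, x ∈ s) → ∃ y ∈ s, ∀ x ∈ t, IsGLB {x, y} b) :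
    b ∈ closure s := by
  have hsymm : Std.Symm fun x y : X => IsGLB {x, y} b := ⟨fun x y hxy => pair_comm x y ▸ hxy⟩
  obtain ⟨f, hf, hglb⟩ := exists_seq_of_forall_finset_exists' (· ∈ s) _ h
  exact mem_closure_of_tendsto
    (hX.tendsto_cofinite_of_pairwise_isGLB hIci (fun k => hmax _ (hf k)) hglb)
    (Eventually.of_forall hf)

end FeeblyCompact

section

variable {X Y ι : Type*} [TopologicalSpace X]

theorem not_locallyFinite_of_tendsto {l : Filter ι} [NeBot l] (hl : l ≤ cofinite)
    {U : ι → Set X} {x : ι → X} {a : X} (hx : ∀ i, x i ∈ U i) (hlim : Tendsto x l (𝓝 a)) :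
    ¬LocallyFinite U := by
  intro hlf
  obtain ⟨t, ht, hfin⟩ := hlf a
  obtain ⟨i, hit, hiU⟩ := ((hlim.eventually_mem ht).and (hl hfin.compl_mem_cofinite)).exists
  exact hiU ⟨x i, hx i, hit⟩

theorem isClopen_preimage_of_finite_range [TopologicalSpace Y] [T1Space Y] {f : X → Y}
    (hf : Continuous f) (hfin : (range f).Finite) (s : Set Y) : IsClopen (f ⁻¹' s) := by
  have : Finite (range f) := hfin
  exact (isClopen_discrete ((↑) ⁻¹' s : Set (range f))).preimage hf.rangeFactorization

end

namespace SymInvSg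

variable {γ : Type*} {n : ℕ}

/-- The inverse of a partial bijection. -/
instance : Inv (SymInvSg γ n) where
  inv a :=
    { graph := Prod.swap ⁻¹' a.graph
      inj' := fun _ _ _ _ h h' => (a.inj' h h').symm
      finite' := a.finite'.preimage Prod.swap_injective.injOn
      card_le' := by
        rw [Set.ncard_preimage_of_injective_subset_range Prod.swap_injective
          fun q _ => Prod.swap_surjective q]
        exact a.card_le' }

theorem inv_mul_mul_inv_eq_iff {a b : SymInvSg γ n} : a⁻¹ * b * a⁻¹ = a⁻¹ ↔ a ≤ b := by
  constructor
  · rintro h ⟨x, y⟩ hxy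
    have hyx : (y, x) ∈ (a⁻¹ * b * a⁻¹).graph := h.symm ▸ hxy
    obtain ⟨w, ⟨z, hzy, hzw⟩, hxw⟩ := hyx
    obtain rfl : z = x := (a.inj' hzy hxy).2 rfl
    obtain rfl : w = y := (a.inj' hxw hxy).1 rfl
    exact hzw
  · intro h
    refine ext' (Set.ext fun ⟨y, x⟩ => ⟨?_, fun hxy => ⟨y, ⟨x, hxy, h hxy⟩, hxy⟩⟩)
    rintro ⟨w, ⟨z, hzy, hzw⟩, hxw⟩
    obtain rfl : y = w := (b.inj' (h hzy) hzw).1 rfl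
    exact hxw

theorem finite_range_mul_mul (a c : SymInvSg γ n) : (range fun b => a * b * c).Finite := by
  have hfin : (𝒫 ((Prod.fst '' a.graph) ×ˢ (Prod.snd '' c.graph))).Finite :=
    ((a.finite'.image _).prod (c.finite'.image _)).finite_subsets
  refine Set.Finite.of_finite_image (f := graph) (hfin.subset ?_) fun _ _ _ _ h => ext' h
  rintro _ ⟨_, ⟨b, rfl⟩, rfl⟩ ⟨x, y⟩ ⟨w, ⟨z, hxz, -⟩, hwy⟩
  exact ⟨⟨_, hxz, rfl⟩, ⟨_, hwy, rfl⟩⟩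

theorem isMax_of_rank_eq {a : SymInvSg γ n} (ha : a.rank = n) : IsMax a := fun b hab =>
  (Set.eq_of_subset_of_ncard_le hab (b.card_le'.trans ha.ge) b.finite').ge

theorem isGLB_pair_of_graph_inter_subset {a b c : SymInvSg γ n} (ha : c ≤ a) (hb : c ≤ b)
    (h : a.graph ∩ b.graph ⊆ c.graph) : IsGLB {a, b} c := by
  refine ⟨?_, fun d hd => (subset_inter (hd (by simp)) (hd (by simp))).trans h⟩
  rintro _ (rfl | rfl)
  exacts [ha, hb]

/-- The extension of `a` by the identity of a finite set `T` disjoint from the domain and the range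
of `a`. -/
def adjoinId (a : SymInvSg γ n) (T : Finset γ) (hT : ∀ q ∈ a.graph, q.1 ∉ T ∧ q.2 ∉ T)
    (hcard : a.rank + T.card ≤ n) : SymInvSg γ n where
  graph := a.graph ∪ (fun z => (z, z)) '' T
  inj' := by
    rintro x y x' y' (h | ⟨z, hz, ⟨⟩⟩) (h' | ⟨z', hz', ⟨⟩⟩)
    · exact a.inj' h h'
    · exact iff_of_false (fun hx => (hT _ h).1 (hx ▸ hz')) fun hy => (hT _ h).2 (hy ▸ hz')
    · exact iff_of_false (fun hx => (hT _ h').1 (hx ▸ hz)) fun hy => (hT _ h').2 (hy ▸ hz)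
    · exact Iff.rfl
  finite' := a.finite'.union (T.finite_toSet.image _)
  card_le' := by
    refine (Set.ncard_union_le _ _).trans (le_trans (Nat.add_le_add_left ?_ _) hcard)
    exact (Set.ncard_image_le T.finite_toSet).trans_eq (Set.ncard_coe_finset T)

theorem rank_adjoinId (a : SymInvSg γ n) (T : Finset γ)
    (hT : ∀ q ∈ a.graph, q.1 ∉ T ∧ q.2 ∉ T) (hcard : a.rank + T.card ≤ n) :
    (a.adjoinId T hT hcard).rank = a.rank + T.card := by
  have hdisj : Disjoint a.graph ((fun z => (z, z)) '' (T : Set γ)) := by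
    rw [Set.disjoint_left]
    rintro _ hq ⟨z, hz, rfl⟩
    exact (hT _ hq).1 hz
  have hinj : Function.Injective fun z : γ => (z, z) := fun _ _ h => congrArg Prod.fst h
  change (a.graph ∪ (fun z => (z, z)) '' (T : Set γ)).ncard = _
  rw [Set.ncard_union_eq hdisj a.finite' (T.finite_toSet.image _),
    Set.ncard_image_of_injective _ hinj, Set.ncard_coe_finset, rank]

theorem exists_isMax_ge_inter_graph_subset [Infinite γ] (a : SymInvSg γ n) {E : Set (γ × γ)}
    (hE : E.Finite) : ∃ b : SymInvSg γ n, IsMax b ∧ a ≤ b ∧ E ∩ b.graph ⊆ a.graph := by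
  have hF : (a.graph ∪ E).Finite := a.finite'.union hE
  obtain ⟨T, hT, hTcard⟩ := ((hF.image Prod.fst).union
    (hF.image Prod.snd)).infinite_compl.exists_subset_card_eq (n - a.rank)
  have hfresh : ∀ q ∈ a.graph ∪ E, q.1 ∉ T ∧ q.2 ∉ T := fun q hq =>
    ⟨fun h => hT h (.inl ⟨q, hq, rfl⟩), fun h => hT h (.inr ⟨q, hq, rfl⟩)⟩
  have hcard : a.rank + T.card = n := hTcard ▸ Nat.add_sub_of_le a.card_le'
  refine ⟨a.adjoinId T (fun q hq => hfresh q (.inl hq)) hcard.le,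
    isMax_of_rank_eq ((rank_adjoinId ..).trans hcard), subset_union_left, ?_⟩
  rintro _ ⟨hqE, hqa | ⟨z, hz, rfl⟩⟩
  · exact hqa
  · exact absurd hz (hfresh _ (.inr hqE)).1

theorem eventually_subset_graph {l : Filter (SymInvSg γ n)} {s : Set (γ × γ)} (hs : s.Finite)
    (h : ∀ q ∈ s, ∀ᶠ a in l, q ∈ a.graph) : ∀ᶠ a in l, s ⊆ a.graph :=
  (eventually_all_finite hs).2 h

theorem finite_setOf_eventually_mem_graph_and_ncard_le (l : Filter (SymInvSg γ n)) [NeBot l] :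
    {q | ∀ᶠ a in l, q ∈ a.graph}.Finite ∧ {q | ∀ᶠ a in l, q ∈ a.graph}.ncard ≤ n := by
  rw [← Set.encard_le_coe_iff_finite_ncard_le]
  by_contra! hlt
  obtain ⟨t, ht, htcard⟩ := Set.exists_subset_encard_eq (Order.add_one_le_of_lt hlt)
  have htfin : t.Finite := Set.finite_of_encard_eq_coe (k := n + 1) (by simpa using htcard)
  obtain ⟨a, ha⟩ := (eventually_subset_graph htfin ht).exists
  have hle : t.encard ≤ n := (Set.encard_le_encard ha).trans
    (Set.encard_le_coe_iff_finite_ncard_le.2 ⟨a.finite', a.card_le'⟩)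
  rw [htcard] at hle
  exact absurd hle (by exact_mod_cast (Nat.lt_succ_self n).not_ge)

/-- The lower limit of a filter of partial bijections: its graph consists of the pairs which belong
to almost all the graphs. -/
def lowerLimit (l : Filter (SymInvSg γ n)) [NeBot l] : SymInvSg γ n where
  graph := {q | ∀ᶠ a in l, q ∈ a.graph}
  inj' := by
    intro x y x' y' h h'
    obtain ⟨a, ha, ha'⟩ := (h.and h').exists
    exact a.inj' ha ha'
  finite' := (finite_setOf_eventually_mem_graph_and_ncard_le l).1
  card_le' := by exact (finite_setOf_eventually_mem_graph_and_ncard_le l).2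

theorem eventually_lowerLimit_le (l : Filter (SymInvSg γ n)) [NeBot l] :
    ∀ᶠ a in l, lowerLimit l ≤ a :=
  eventually_subset_graph (lowerLimit l).finite' fun _ hq => hq

theorem eventually_inter_graph_subset_lowerLimit (𝒰 : Ultrafilter (SymInvSg γ n))
    (a : SymInvSg γ n) :
    ∀ᶠ b in 𝒰.toFilter, a.graph ∩ b.graph ⊆ (lowerLimit 𝒰.toFilter).graph := by
  have hmem : ∀ q ∈ a.graph, ∀ᶠ b in 𝒰.toFilter,
      q ∈ b.graph → q ∈ (lowerLimit 𝒰.toFilter).graph := by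
    intro q _
    by_cases hq : ∀ᶠ b in 𝒰.toFilter, q ∈ b.graph
    · exact Eventually.of_forall fun _ _ => hq
    · exact (Ultrafilter.eventually_not.2 hq).mono fun _ hqb hqb' => absurd hqb' hqb
  exact ((eventually_all_finite a.finite').2 hmem).mono fun b hb q hq => hb q hq.1 hq.2

variable [TopologicalSpace (SymInvSg γ n)]

theorem isClopen_Ici [T1Space (SymInvSg γ n)] (hsc : ShiftContinuous (SymInvSg γ n))
    (a : SymInvSg γ n) : IsClopen (Ici a) := by
  have hIci : Ici a = (fun b => a⁻¹ * b * a⁻¹) ⁻¹' {a⁻¹} :=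
    Set.ext fun _ => inv_mul_mul_inv_eq_iff.symm
  rw [hIci]
  exact isClopen_preimage_of_finite_range ((hsc _).2.comp (hsc _).1) (finite_range_mul_mul _ _) _

theorem dense_setOf_isMax [Infinite γ] (hfc : FeeblyCompact (SymInvSg γ n))
    (hIci : ∀ a : SymInvSg γ n, IsClopen (Ici a)) : Dense {a : SymInvSg γ n | IsMax a} := by
  intro a
  suffices a ∈ closure {b | IsMax b ∧ a ≤ b} from closure_mono (fun _ hb => hb.1) this
  refine hfc.mem_closure_of_forall_finset_exists_isGLB hIci (fun _ hb => hb.1) fun t ht => ?_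
  obtain ⟨b, hmax, hab, hb⟩ := a.exists_isMax_ge_inter_graph_subset
    (t.finite_toSet.biUnion fun x _ => x.finite')
  exact ⟨b, ⟨hmax, hab⟩, fun x hx => isGLB_pair_of_graph_inter_subset (ht x hx).2 hab
    fun q hq => hb ⟨mem_biUnion hx hq.1, hq.2⟩⟩

theorem ultrafilter_le_nhds_lowerLimit (hfc : FeeblyCompact (SymInvSg γ n))
    (hIci : ∀ a : SymInvSg γ n, IsClopen (Ici a)) {𝒰 : Ultrafilter (SymInvSg γ n)}
    (h𝒰 : ∀ᶠ a in 𝒰.toFilter, IsMax a) : 𝒰.toFilter ≤ 𝓝 (lowerLimit 𝒰.toFilter) := by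
  rw [← Ultrafilter.clusterPt_iff, clusterPt_iff_forall_mem_closure]
  intro s hs
  let s' : Set (SymInvSg γ n) := {a ∈ s | IsMax a ∧ lowerLimit 𝒰.toFilter ≤ a}
  have hs' : ∀ᶠ a in 𝒰.toFilter, a ∈ s' :=
    Eventually.and hs (h𝒰.and (eventually_lowerLimit_le _))
  suffices lowerLimit 𝒰.toFilter ∈ closure s' from closure_mono (fun _ ha => ha.1) this
  refine hfc.mem_closure_of_forall_finset_exists_isGLB hIci (fun _ ha => ha.2.1) fun t ht => ?_
  obtain ⟨b, hb, hbt⟩ := (hs'.and ((eventually_all_finset t).2 fun a _ =>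
    eventually_inter_graph_subset_lowerLimit 𝒰 a)).exists
  exact ⟨b, hb, fun a ha => isGLB_pair_of_graph_inter_subset (ht a ha).2.2 hb.2.2 (hbt a ha)⟩

theorem exists_dense_forall_ultrafilter_le_nhds [T1Space (SymInvSg γ n)]
    (hsc : ShiftContinuous (SymInvSg γ n)) (hfc : FeeblyCompact (SymInvSg γ n)) :
    ∃ D : Set (SymInvSg γ n), Dense D ∧
      ∀ 𝒰 : Ultrafilter (SymInvSg γ n), D ∈ 𝒰 → ∃ a, 𝒰.toFilter ≤ 𝓝 a := by
  rcases finite_or_infinite γ with _ | _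
  · have : Finite (SymInvSg γ n) := Finite.of_injective graph fun _ _ => ext'
    exact ⟨univ, dense_univ, fun 𝒰 _ => ⟨_, 𝒰.le_nhds_lim⟩⟩
  · exact ⟨_, dense_setOf_isMax hfc (isClopen_Ici hsc),
      fun 𝒰 h𝒰 => ⟨_, ultrafilter_le_nhds_lowerLimit hfc (isClopen_Ici hsc) h𝒰⟩⟩

end SymInvSg

section SigmaProduct

variable {J : Type*} {X : J → Type*}

/-- The `Σ`-product `Σ(p, X)` of a family `X` with basis point `p`. -/
def sigmaProduct (p : ∀ i, X i) : Set (∀ i, X i) :=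
  {x | {i | x i ≠ p i}.Countable}

theorem piecewise_mem_sigmaProduct {C : Set J} [∀ i, Decidable (i ∈ C)] (hC : C.Countable)
    (x p : ∀ i, X i) : C.piecewise x p ∈ sigmaProduct p :=
  hC.mono fun _ hi => by_contra fun hiC => hi (C.piecewise_eq_of_notMem x p hiC)

variable [∀ i, TopologicalSpace (X i)]

theorem exists_finset_forall_eq_mem_of_isOpen {D : ∀ i, Set (X i)} (hD : ∀ i, Dense (D i))
    {s : Set (∀ i, X i)} {U : Set s} (hU : IsOpen U) (hne : U.Nonempty) :
    ∃ (I : Finset J) (x : ∀ i, X i), (∀ i, x i ∈ D i) ∧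
      ∀ z : s, (∀ i ∈ I, z.1 i = x i) → z ∈ U := by
  obtain ⟨V, hV, rfl⟩ := isOpen_induced_iff.1 hU
  obtain ⟨x, hxV, hxD⟩ :=
    (dense_pi univ fun i _ => hD i).inter_open_nonempty V hV (hne.image (↑) |>.mono (by simp))
  obtain ⟨I, v, hv, hsub⟩ := isOpen_pi_iff.1 hV x hxV
  exact ⟨I, x, fun i => hxD i trivial, fun z hz => hsub fun i hi => (hz i hi).symm ▸ (hv i hi).2⟩

theorem feeblyCompact_sigmaProduct_of_dense {l : Filter ℕ} [NeBot l] (hl : l ≤ cofinite)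
    {D : ∀ i, Set (X i)} (hD : ∀ i, Dense (D i))
    (hlim : ∀ i (u : ℕ → X i), (∀ k, u k ∈ D i) → ∃ a, Tendsto u l (𝓝 a)) (p : ∀ i, X i) :
    FeeblyCompact (sigmaProduct p) := by
  classical
  refine .of_forall_nat_not_locallyFinite fun U hU => ?_
  choose I x hxD hxU using fun k => exists_finset_forall_eq_mem_of_isOpen hD (hU k).1 (hU k).2
  choose a ha using fun i => hlim i (fun k => x k i) fun k => hxD k i
  let C : Set J := ⋃ k, I k
  have hC : C.Countable := countable_iUnion fun k => (I k).countable_toSet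
  let onC (z : ∀ i, X i) : sigmaProduct p := ⟨C.piecewise z p, piecewise_mem_sigmaProduct hC z p⟩
  have hmem (k : ℕ) : onC (x k) ∈ U k := hxU k _ fun i hi =>
    C.piecewise_eq_of_mem _ _ (mem_iUnion_of_mem k hi)
  have htendsto : Tendsto (fun k => onC (x k)) l (𝓝 (onC a)) := by
    refine tendsto_subtype_rng.2 (tendsto_pi_nhds.2 fun i => ?_)
    by_cases hi : i ∈ C
    · simpa only [onC, C.piecewise_eq_of_mem _ _ hi] using ha i
    · simpa only [onC, C.piecewise_eq_of_notMem _ _ hi] using tendsto_const_nhds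
  exact not_locallyFinite_of_tendsto hl hmem htendsto

end SigmaProduct

theorem feeblyCompact_sigmaProduct_general {J : Type*} {γ : J → Type*} {n : J → ℕ}
    [∀ i, TopologicalSpace (SymInvSg (γ i) (n i))] [∀ i, T1Space (SymInvSg (γ i) (n i))]
    (hsc : ∀ i, ShiftContinuous (SymInvSg (γ i) (n i)))
    (hfc : ∀ i, FeeblyCompact (SymInvSg (γ i) (n i))) (p : ∀ i, SymInvSg (γ i) (n i)) :
    FeeblyCompact (sigmaProduct p) := by
  choose D hD hlim using fun i =>
    SymInvSg.exists_dense_forall_ultrafilter_le_nhds (hsc i) (hfc i)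
  exact feeblyCompact_sigmaProduct_of_dense (hyperfilter_le_cofinite (α := ℕ)) hD
    (fun i u hu => hlim i ((hyperfilter ℕ).map u) (Ultrafilter.mem_map.2 (univ_mem' hu))) p

/-- For a family of feebly compact `T₁`-semitopological semigroups
`𝓘_{λ_i}^{n_i}` and any idempotent `p` of the Tychonoff product `X`, the `Σ`-product
`Σ(p, X) = {x ∈ X : |{i : x i ≠ p i}| ≤ ω}` is feebly compact. -/
theorem feeblyCompact_sigmaProduct {J : Type*} {γ : J → Type*} [∀ i, Infinite (γ i)]
    {n : J → ℕ} (hn : ∀ i, 0 < n i)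
    [∀ i, TopologicalSpace (SymInvSg (γ i) (n i))] [∀ i, T1Space (SymInvSg (γ i) (n i))]
    (hsc : ∀ i, ShiftContinuous (SymInvSg (γ i) (n i)))
    (hfc : ∀ i, FeeblyCompact (SymInvSg (γ i) (n i)))
    (p : ∀ i, SymInvSg (γ i) (n i)) (hp : p * p = p) :
    FeeblyCompact {x : ∀ i, SymInvSg (γ i) (n i) | {i | x i ≠ p i}.Countable} :=
  feeblyCompact_sigmaProduct_general hsc hfc p
end
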